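/- Let Γ be a Shilla distance-regular graph with b = b(Γ) ≥ 2 such that the multiplicities of the two smallest eigenvalues are equal (m₂ = m₃). Then a₃ - b < b₂ + c₂ < a₃ + b. -/

import Mathlib

open Finset SimpleGraph

/-- `G` is a distance-regular graph with diameter `D` and intersection numbers
`b i`, `c i`, `a i` (so valency `k = b 0` and `a i = k - b i - c i`). -/
structure IsDRG {V : Type*} [Fintype V] (G : SimpleGraph V) (D : ℕ)
    (b c a : ℕ → ℕ) : Prop where
  connected : G.Connected
  le_diam : ∀ x y : V, G.dist x y ≤ D
  exists_diam : ∃ x y : V, G.dist x y = D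
  card_b : ∀ i, i ≤ D → ∀ x y : V, G.dist x y = i →
      Nat.card {z : V | G.Adj y z ∧ G.dist x z = i + 1} = b i
  card_c : ∀ i, i ≤ D → ∀ x y : V, G.dist x y = i →
      Nat.card {z : V | G.Adj y z ∧ G.dist x z = i - 1} = c i
  card_a : ∀ i, i ≤ D → ∀ x y : V, G.dist x y = i →
      Nat.card {z : V | G.Adj y z ∧ G.dist x z = i} = a i

/-- `θ` is an eigenvalue of the adjacency matrix of `G`. -/
def IsEig {V : Type*} [Fintype V] [DecidableEq V] (G : SimpleGraph V)
    [DecidableRel G.Adj] (θ : ℝ) : Prop :=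
  ∃ v : V → ℝ, v ≠ 0 ∧ (G.adjMatrix ℝ).mulVec v = θ • v

/-- `θ` is the second largest eigenvalue of `G` (`k` being the largest). -/
def IsSecondLargestEig {V : Type*} [Fintype V] [DecidableEq V] (G : SimpleGraph V)
    [DecidableRel G.Adj] (k θ : ℝ) : Prop :=
  IsEig G θ ∧ θ < k ∧ ∀ η : ℝ, IsEig G η → η ≠ k → η ≤ θ

/-- `θ` is the smallest eigenvalue of `G`. -/
def IsSmallestEig {V : Type*} [Fintype V] [DecidableEq V] (G : SimpleGraph V)
    [DecidableRel G.Adj] (θ : ℝ) : Prop :=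
  IsEig G θ ∧ ∀ η : ℝ, IsEig G η → θ ≤ η

/-- The multiplicity of `θ` as an eigenvalue of the adjacency matrix of `G`. -/
noncomputable def eigMult {V : Type*} [Fintype V] [DecidableEq V] (G : SimpleGraph V)
    [DecidableRel G.Adj] (θ : ℝ) : ℕ :=
  Module.finrank ℝ ↥(Module.End.eigenspace (Matrix.toLin' (G.adjMatrix ℝ)) θ)

/-- A Shilla distance-regular graph: diameter `3` and second largest eigenvalue `a 3`. -/
structure IsShilla {V : Type*} [Fintype V] [DecidableEq V] (G : SimpleGraph V)
    [DecidableRel G.Adj] (b c a : ℕ → ℕ) : Prop where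
  drg : IsDRG G 3 b c a
  second : IsSecondLargestEig G (b 0) ((a 3 : ℝ))

/-- The number of eigenvalues of a real Hermitian matrix equal to `μ` is the dimension of the
`μ`-eigenspace. -/
theorem Matrix.IsHermitian.card_eigenvalues_eq {n : Type*} [Fintype n] [DecidableEq n]
    {A : Matrix n n ℝ} (hA : A.IsHermitian) (μ : ℝ) :
    #{i | hA.eigenvalues i = μ} =
      Module.finrank ℝ (Module.End.eigenspace (Matrix.toLin' A) μ) := by
  have hT := Matrix.isSymmetric_toEuclideanLin_iff.mpr hA
  have hcard := hT.card_filter_eigenvalues_eq finrank_euclideanSpace μ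
  have hspace : Module.finrank ℝ (Module.End.eigenspace (Matrix.toEuclideanLin A) μ) =
      Module.finrank ℝ (Module.End.eigenspace (Matrix.toLin' A) μ) := by
    suffices hmap : (Module.End.eigenspace (Matrix.toEuclideanLin A) μ).map
        (WithLp.linearEquiv 2 ℝ (n → ℝ) : WithLp 2 (n → ℝ) →ₗ[ℝ] n → ℝ) =
        Module.End.eigenspace (Matrix.toLin' A) μ by
      rw [← hmap, LinearEquiv.finrank_map_eq]
    ext v
    constructor
    · rintro ⟨w, hw, rfl⟩
      have hw := Module.End.mem_eigenspace_iff.mp hw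
      exact Module.End.mem_eigenspace_iff.mpr (congrArg WithLp.ofLp hw)
    · intro hv
      have hv := Module.End.mem_eigenspace_iff.mp hv
      exact ⟨WithLp.toLp 2 v, Module.End.mem_eigenspace_iff.mpr (congrArg (WithLp.toLp 2) hv), rfl⟩
  rw [← hspace, ← hcard]
  exact Finset.card_equiv (Fintype.equivOfCardEq (Fintype.card_fin _)).symm
    fun i ↦ by simp only [mem_filter, mem_univ, true_and]; rfl

/-- The trace of the square of a real Hermitian matrix is the sum of its squared eigenvalues. -/
theorem Matrix.IsHermitian.trace_mul_self_eq_sum {n : Type*} [Fintype n] [DecidableEq n]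
    {A : Matrix n n ℝ} (hA : A.IsHermitian) :
    (A * A).trace = ∑ i, hA.eigenvalues i ^ 2 := by
  conv_lhs => rw [hA.spectral_theorem]
  rw [← map_mul, Unitary.conjStarAlgAut_apply, Matrix.trace_mul_cycle,
    Unitary.coe_star_mul_self, one_mul, Matrix.diagonal_mul_diagonal, Matrix.trace_diagonal]
  simp [sq]

/-- A sum over the eigenvalues of a real Hermitian matrix, grouped by value. -/
theorem Matrix.IsHermitian.sum_eigenvalues_eq {n : Type*} [Fintype n] [DecidableEq n]
    {A : Matrix n n ℝ} (hA : A.IsHermitian) (s : Finset ℝ) (hs : ∀ i, hA.eigenvalues i ∈ s)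
    (f : ℝ → ℝ) :
    ∑ i, f (hA.eigenvalues i) =
      ∑ μ ∈ s, (Module.finrank ℝ (Module.End.eigenspace (Matrix.toLin' A) μ) : ℝ) * f μ := by
  rw [← Finset.sum_fiberwise_of_maps_to (fun i _ ↦ hs i)]
  refine Finset.sum_congr rfl fun μ _ ↦ ?_
  rw [← hA.card_eigenvalues_eq, ← nsmul_eq_mul]
  exact Finset.sum_eq_card_nsmul (by simp +contextual)

/-- A regular connected graph has its valency as an eigenvalue of multiplicity one. -/
theorem eigMult_of_regular {V : Type*} [Fintype V] [DecidableEq V] (G : SimpleGraph V)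
    [DecidableRel G.Adj] (hconn : G.Connected) {k : ℕ} (hreg : G.IsRegularOfDegree k) :
    eigMult G k = 1 := by
  have hspace : Module.End.eigenspace (Matrix.toLin' (G.adjMatrix ℝ)) (k : ℝ) =
      LinearMap.ker (Matrix.toLin' (G.lapMatrix ℝ)) := by
    ext v
    simp only [Module.End.mem_eigenspace_iff, LinearMap.mem_ker, Matrix.toLin'_apply, funext_iff,
      lapMatrix_mulVec_apply, adjMatrix_mulVec_apply, hreg.degree_eq, Pi.smul_apply,
      Pi.zero_apply, smul_eq_mul, sub_eq_zero]
    exact forall_congr' fun _ ↦ eq_comm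
  classical
  have hsub := hconn.preconnected.subsingleton_connectedComponent
  have : Nonempty G.ConnectedComponent := hconn.nonempty.map G.connectedComponentMk
  rw [eigMult, hspace, ← card_connectedComponent_eq_finrank_ker_toLin'_lapMatrix]
  exact le_antisymm (Fintype.card_le_one_iff_subsingleton.mpr hsub) Fintype.card_pos

/-- Eigenvalues of the adjacency matrix in the sense of `Matrix.IsHermitian.eigenvalues` satisfy
`IsEig`. -/
theorem isEig_eigenvalues {V : Type*} [Fintype V] [DecidableEq V] (G : SimpleGraph V)
    [DecidableRel G.Adj] (hA : (G.adjMatrix ℝ).IsHermitian) (i : V) :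
    IsEig G (hA.eigenvalues i) :=
  ⟨hA.eigenvectorBasis i,
    fun h ↦ hA.eigenvectorBasis.orthonormal.ne_zero i (WithLp.ofLp_injective 2 h),
    hA.mulVec_eigenvectorBasis i⟩

/-- A nontrivial distance is lowered by exactly one at some neighbour. -/
theorem SimpleGraph.Connected.exists_adj_dist_eq {W : Type*} {H : SimpleGraph W}
    (hconn : H.Connected) {x y : W} {i : ℕ} (h : H.dist x y = i + 1) :
    ∃ z, H.Adj y z ∧ H.dist x z = i := by
  obtain ⟨p, hp⟩ := hconn.exists_walk_length_eq_dist y x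
  rw [dist_comm, h] at hp
  cases p with
  | nil => simp at hp
  | @cons _ z _ hyz q =>
    refine ⟨z, hyz, ?_⟩
    have hq : H.dist x z ≤ q.length := dist_comm (G := H) ▸ dist_le q
    have := hyz.diff_dist_adj (u := x)
    simp only [Walk.length_cons] at hp
    omega

theorem card_filter_eq_natCard {V : Type*} [Fintype V] (p : V → Prop) [DecidablePred p] :
    #{z | p z} = Nat.card {z : V | p z} := by
  rw [Nat.card_eq_card_toFinset]
  congr 1
  ext
  simp

/-- For `y` at distance `j` from `x`, `intersectionNumber b c a i j` is the number of neighbours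
of `y` at distance `i` from `x`. -/
def intersectionNumber (b c a : ℕ → ℕ) (i j : ℕ) : ℕ :=
  if i = j + 1 then b j else if i = j then a j else if i + 1 = j then c j else 0

namespace IsDRG

variable {V : Type*} [Fintype V] {G : SimpleGraph V} {D : ℕ} {b c a : ℕ → ℕ}

theorem exists_dist_eq (h : IsDRG G D b c a) (x : V) {i j : ℕ} (hij : i ≤ j)
    (hj : ∃ y, G.dist x y = j) : ∃ y, G.dist x y = i := by
  induction j, hij using Nat.le_induction with
  | base => exact hj
  | succ j _ ih =>
    obtain ⟨y, hy⟩ := hj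
    obtain ⟨z, -, hz⟩ := h.connected.exists_adj_dist_eq hy
    exact ih ⟨z, hz⟩

variable [DecidableRel G.Adj]

/-- The neighbours of a vertex at a given distance from another vertex are counted by the
intersection numbers. -/
theorem card_neighbors (h : IsDRG G D b c a) (x y : V) (i : ℕ) :
    #{z ∈ G.neighborFinset y | G.dist x z = i} = intersectionNumber b c a i (G.dist x y) := by
  have hfilter : #{z ∈ G.neighborFinset y | G.dist x z = i} =
      Nat.card {z : V | G.Adj y z ∧ G.dist x z = i} := by
    rw [← card_filter_eq_natCard]
    congr 1
    ext
    simp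
  rw [hfilter, intersectionNumber]
  split_ifs with h1 h2 h3
  · rw [h1, h.card_b _ (h.le_diam x y) x y rfl]
  · rw [h2, h.card_a _ (h.le_diam x y) x y rfl]
  · rw [← h.card_c _ (h.le_diam x y) x y rfl, ← h3, Nat.add_sub_cancel]
  · rw [Nat.card_eq_zero]
    left
    rw [Set.isEmpty_coe_sort, Set.eq_empty_iff_forall_notMem]
    rintro z ⟨hz, rfl⟩
    have := hz.diff_dist_adj (u := x)
    omega

/-- Counting neighbours of a vertex by their distance from a second vertex. -/
theorem degree_eq_sum (h : IsDRG G D b c a) (x y : V) :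
    G.degree y = ∑ i ∈ range (D + 1), intersectionNumber b c a i (G.dist x y) := by
  rw [← card_neighborFinset_eq_degree, Finset.card_eq_sum_card_fiberwise (f := G.dist x)
    (t := range (D + 1)) fun z _ ↦ by simpa [Nat.lt_succ_iff] using h.le_diam x z]
  exact Finset.sum_congr rfl fun i _ ↦ h.card_neighbors x y i

/-- The sphere sums of `A v` around `x` are obtained from those of `v` through the intersection
matrix. -/
theorem sum_sphere_mulVec (h : IsDRG G D b c a) (x : V) (v : V → ℝ) (i : ℕ) :
    ∑ y with G.dist x y = i, (G.adjMatrix ℝ).mulVec v y =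
      ∑ j ∈ range (D + 1),
        (intersectionNumber b c a i j : ℝ) * ∑ z with G.dist x z = j, v z := by
  have hswap : ∑ y with G.dist x y = i, (G.adjMatrix ℝ).mulVec v y =
      ∑ z, (intersectionNumber b c a i (G.dist x z) : ℝ) * v z := by
    simp only [adjMatrix_mulVec_apply]
    rw [Finset.sum_comm' (t' := univ) (s' := fun z ↦ {y ∈ G.neighborFinset z | G.dist x y = i})
      (by simp [adj_comm, and_comm])]
    refine Finset.sum_congr rfl fun z _ ↦ ?_
    rw [sum_const, h.card_neighbors, nsmul_eq_mul]
  rw [hswap, ← Finset.sum_fiberwise_of_maps_to (g := G.dist x) (t := range (D + 1))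
    fun z _ ↦ by simpa [Nat.lt_succ_iff] using h.le_diam x z]
  refine Finset.sum_congr rfl fun j _ ↦ ?_
  rw [mul_sum]
  refine Finset.sum_congr rfl fun z hz ↦ ?_
  rw [(mem_filter.mp hz).2]

theorem isRegularOfDegree (h : IsDRG G D b c a) : G.IsRegularOfDegree (b 0) := by
  intro y
  rw [← h.card_b 0 (Nat.zero_le D) y y dist_self, ← card_filter_eq_natCard,
    ← card_neighborFinset_eq_degree]
  congr 1
  ext
  simp [dist_eq_one_iff_adj]

theorem b_pos (h : IsDRG G D b c a) {i : ℕ} (hi : i < D) : 0 < b i := by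
  obtain ⟨x, y, hxy⟩ := h.exists_diam
  obtain ⟨y, hy⟩ := h.exists_dist_eq x hi ⟨y, hxy⟩
  obtain ⟨z, hyz, hz⟩ := h.connected.exists_adj_dist_eq hy
  have := h.card_neighbors x z (i + 1)
  rw [hz, intersectionNumber, if_pos rfl] at this
  rw [← this, Finset.card_pos]
  exact ⟨y, by simp [hyz.symm, hy]⟩

theorem c_pos (h : IsDRG G D b c a) {i : ℕ} (hi : i < D) : 0 < c (i + 1) := by
  obtain ⟨x, y, hxy⟩ := h.exists_diam
  obtain ⟨y, hy⟩ := h.exists_dist_eq x hi ⟨y, hxy⟩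
  obtain ⟨z, hyz, hz⟩ := h.connected.exists_adj_dist_eq hy
  have := h.card_neighbors x y i
  rw [hy, intersectionNumber, if_neg (by omega), if_neg (by omega), if_pos rfl] at this
  rw [← this, Finset.card_pos]
  exact ⟨z, by simp [hyz, hz]⟩

theorem a_zero (h : IsDRG G D b c a) : a 0 = 0 := by
  obtain ⟨x⟩ := h.connected.nonempty
  have := h.card_neighbors x x 0
  rw [dist_self, intersectionNumber, if_neg (by omega), if_pos rfl] at this
  rw [← this, Finset.card_eq_zero, Finset.filter_eq_empty_iff]
  intro z hz hxz
  rw [h.connected.dist_eq_zero_iff] at hxz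
  simp [hxz] at hz

theorem c_one (h : IsDRG G D b c a) (hD : 1 ≤ D) : c 1 = 1 := by
  obtain ⟨x, y, hxy⟩ := h.exists_diam
  obtain ⟨y, hy⟩ := h.exists_dist_eq x hD ⟨y, hxy⟩
  have := h.card_neighbors x y 0
  rw [hy, intersectionNumber, if_neg (by omega), if_neg (by omega), if_pos rfl] at this
  rw [← this, Finset.card_eq_one]
  refine ⟨x, ?_⟩
  ext z
  simp only [mem_filter, mem_neighborFinset, h.connected.dist_eq_zero_iff, mem_singleton]
  exact ⟨fun hz ↦ hz.2.symm, fun hz ↦ ⟨hz ▸ (dist_eq_one_iff_adj.mp hy).symm, hz.symm⟩⟩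

theorem valency_eq_sum (h : IsDRG G D b c a) {j : ℕ} (hj : j ≤ D) :
    b 0 = ∑ i ∈ range (D + 1), intersectionNumber b c a i j := by
  obtain ⟨x, y, hxy⟩ := h.exists_diam
  obtain ⟨y, rfl⟩ := h.exists_dist_eq x hj ⟨y, hxy⟩
  rw [← h.degree_eq_sum, h.isRegularOfDegree.degree_eq]

/-- The valency is the sum of the intersection numbers in each column, in diameter three. -/
theorem valency_eq (h : IsDRG G 3 b c a) :
    (b 0 : ℝ) = 1 + a 1 + b 1 ∧ (b 0 : ℝ) = c 2 + a 2 + b 2 ∧ (b 0 : ℝ) = c 3 + a 3 := by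
  have h₁ := h.valency_eq_sum (j := 1) (by norm_num)
  have h₂ := h.valency_eq_sum (j := 2) (by norm_num)
  have h₃ := h.valency_eq_sum (j := 3) le_rfl
  simp [Finset.sum_range_succ, intersectionNumber, h.c_one] at h₁ h₂ h₃
  exact ⟨mod_cast h₁, mod_cast h₂, mod_cast h₃⟩

/-- The sphere sums of an eigenvector form an eigenvector of the intersection matrix, in
diameter three. -/
theorem sphere_sum_recurrence (h : IsDRG G 3 b c a) (x : V) {v : V → ℝ} {θ : ℝ}
    (hv : (G.adjMatrix ℝ).mulVec v = θ • v) :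
    ∃ s₁ s₂ s₃ : ℝ, ∑ z, v z = v x + s₁ + s₂ + s₃ ∧ θ * v x = s₁ ∧
      θ * s₁ = b 0 * v x + a 1 * s₁ + c 2 * s₂ ∧
      θ * s₂ = b 1 * s₁ + a 2 * s₂ + c 3 * s₃ ∧
      θ * s₃ = b 2 * s₂ + a 3 * s₃ := by
  have hrec (i : ℕ) := h.sum_sphere_mulVec x v i
  simp only [hv, Pi.smul_apply, smul_eq_mul, ← mul_sum] at hrec
  have hzero : ∑ z with G.dist x z = 0, v z = v x := by
    classical
    simp only [h.connected.dist_eq_zero_iff, filter_eq, mem_univ, if_true, sum_singleton]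
  have htotal : ∑ z, v z = ∑ j ∈ range 4, ∑ z with G.dist x z = j, v z :=
    (Finset.sum_fiberwise_of_maps_to
      (fun z _ ↦ by simpa [Nat.lt_succ_iff] using h.le_diam x z) _).symm
  have h0 := hrec 0
  have h1 := hrec 1
  have h2 := hrec 2
  have h3 := hrec 3
  simp only [Finset.sum_range_succ, Finset.sum_range_zero, hzero] at h0 h1 h2 h3 htotal
  norm_num [intersectionNumber, h.a_zero, h.c_one] at h0 h1 h2 h3 htotal
  exact ⟨_, _, _, htotal, h0, h1, h2, h3⟩

end IsDRG

/-- Eigenvalues of a distance-regular graph of diameter three are roots of the characteristic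
polynomial of its intersection matrix. -/
theorem IsDRG.quartic_of_isEig {V : Type*} [Fintype V] [DecidableEq V] {G : SimpleGraph V}
    [DecidableRel G.Adj] {b c a : ℕ → ℕ} (h : IsDRG G 3 b c a) {θ : ℝ} (hθ : IsEig G θ) :
    (θ - a 3) * ((θ - a 2) * (θ ^ 2 - a 1 * θ - b 0) - b 1 * c 2 * θ) =
      b 2 * c 3 * (θ ^ 2 - a 1 * θ - b 0) := by
  obtain ⟨v, hv0, hv⟩ := hθ
  obtain ⟨x, hx⟩ := Function.ne_iff.mp hv0
  obtain ⟨s₁, s₂, s₃, -, e₀, e₁, e₂, e₃⟩ := h.sphere_sum_recurrence x hv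
  refine mul_right_cancel₀ hx ?_
  linear_combination ((θ - a 3) * (θ - a 2) - b 2 * c 3) * (e₁ + (θ - a 1) * e₀)
    - (θ - a 3) * b 1 * c 2 * e₀ + (θ - a 3) * c 2 * e₂ + c 2 * c 3 * e₃

/-- The number of vertices of a distance-regular graph of diameter three. -/
theorem IsDRG.card_mul_eq {V : Type*} [Fintype V] [DecidableEq V] {G : SimpleGraph V}
    [DecidableRel G.Adj] {b c a : ℕ → ℕ} (h : IsDRG G 3 b c a) :
    (Fintype.card V : ℝ) * (c 2 * c 3) =
      (1 + b 0) * (c 2 * c 3) + b 0 * b 1 * c 3 + b 0 * b 1 * b 2 := by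
  obtain ⟨x⟩ := h.connected.nonempty
  have hone : (G.adjMatrix ℝ).mulVec (fun _ ↦ 1) = (b 0 : ℝ) • fun _ ↦ (1 : ℝ) := by
    ext y
    simp [h.isRegularOfDegree.degree_eq]
  obtain ⟨s₁, s₂, s₃, htotal, e₀, e₁, -, e₃⟩ := h.sphere_sum_recurrence x hone
  obtain ⟨k₁, -, k₃⟩ := h.valency_eq
  simp only [sum_const, card_univ, nsmul_eq_mul, mul_one] at htotal e₀ e₁
  subst e₀
  have h₂ : (c 2 : ℝ) * s₂ = b 0 * b 1 := by linear_combination (b 0 : ℝ) * k₁ - e₁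
  have h₃ : (c 3 : ℝ) * s₃ = b 2 * s₂ := by linear_combination e₃ - s₃ * k₃
  linear_combination (c 2 * c 3 : ℝ) * htotal + (c 3 + b 2 : ℝ) * h₂ + (c 2 : ℝ) * h₃

/-- The polynomial inequality behind the bounds on `B + c`: real solutions of the equal
multiplicity identity lie in the strip `|B + c - a| < β`. -/
theorem abs_sub_lt_of_equal_mult_identity {a β B c : ℝ} (ha : 0 ≤ a) (hβ : 2 ≤ β) (hB : 0 ≤ B)
    (hc : 0 < c)
    (h : (B + c) * (B + c - a) * (B + c + (β - 1) * a) - β * B ^ 2 + (2 * β - 3) * c ^ 2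
      + β * (β - 1) * c + (β - 1) ^ 2 * a * c - β * (β - 1) * a * B + (β - 3) * B * c = 0) :
    |B + c - a| < β := by
  have hβ1 : 0 ≤ β - 1 := by linarith
  have hβ0 : 0 ≤ β := by linarith
  have hβ3 : 0 < 2 * β - 3 := by linarith
  have hs : 0 ≤ (B + c) * (B + c + (β - 1) * a) := by positivity
  rw [abs_lt]
  constructor
  · by_contra! hle
    have h₁ := mul_nonneg (sub_nonneg.mpr hle) hs
    have h₂ : 0 ≤ (β - 1) * c * (a - β - (B + c)) := by
      have : 0 ≤ a - β - (B + c) := by linarith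
      positivity
    have h₃ : 0 < 2 * c ^ 2 + 2 * β * B ^ 2 + (2 * β + 2) * B * c
      + 2 * β * (β - 1) * a * B := by positivity
    nlinarith
  · by_contra! hle
    have h₁ := mul_nonneg (sub_nonneg.mpr hle) hs
    have h₂ : 0 < (3 * β - 3) * c ^ 2 + (3 * (β - 1)) * B * c + β * (β - 1) * c
      + (β * (β - 1) + (β - 1) ^ 2) * a * c := by
      have : 0 < β - 1 := by linarith
      have : 0 < 3 * β - 3 := by linarith
      positivity
    nlinarith

/-- Vertex count and the first two spectral moments of a connected regular graph with four
eigenvalues, two of them of the same multiplicity. -/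
theorem spectral_moments_of_four_eigenvalues {V : Type*} [Fintype V] [DecidableEq V]
    (G : SimpleGraph V) [DecidableRel G.Adj] (hconn : G.Connected) {k : ℕ}
    (hreg : G.IsRegularOfDegree k) {θ₁ θ₂ θ₃ : ℝ} (h₁ : θ₁ < k) (h₂ : θ₂ < θ₁) (h₃ : θ₃ < θ₂)
    (hall : ∀ θ : ℝ, IsEig G θ → θ = k ∨ θ = θ₁ ∨ θ = θ₂ ∨ θ = θ₃)
    (hmult : eigMult G θ₂ = eigMult G θ₃) :
    ∃ m₁ m : ℝ, (Fintype.card V : ℝ) = 1 + m₁ + 2 * m ∧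
      0 = k + m₁ * θ₁ + m * (θ₂ + θ₃) ∧
      (Fintype.card V : ℝ) * k = (k : ℝ) ^ 2 + m₁ * θ₁ ^ 2 + m * (θ₂ ^ 2 + θ₃ ^ 2) := by
  have hA : (G.adjMatrix ℝ).IsHermitian := by
    rw [Matrix.IsHermitian, Matrix.conjTranspose_eq_transpose_of_trivial, transpose_adjMatrix]
  have hsum (f : ℝ → ℝ) : ∑ i, f (hA.eigenvalues i) =
      f k + eigMult G θ₁ * f θ₁ + eigMult G θ₂ * (f θ₂ + f θ₃) := by
    rw [hA.sum_eigenvalues_eq {(k : ℝ), θ₁, θ₂, θ₃}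
      fun i ↦ by simpa using hall _ (isEig_eigenvalues G hA i)]
    change ∑ μ ∈ _, (eigMult G μ : ℝ) * f μ = _
    have hk : (k : ℝ) ∉ ({θ₁, θ₂, θ₃} : Finset ℝ) := by
      simp only [mem_insert, mem_singleton]
      rintro (h | h | h) <;> linarith
    have hθ₁ : θ₁ ∉ ({θ₂, θ₃} : Finset ℝ) := by
      simp only [mem_insert, mem_singleton]
      rintro (h | h) <;> linarith
    rw [sum_insert hk, sum_insert hθ₁, sum_pair h₃.ne', eigMult_of_regular G hconn hreg, ← hmult]
    push_cast
    ring
  refine ⟨eigMult G θ₁, eigMult G θ₂, ?_, ?_, ?_⟩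
  · have := hsum fun _ ↦ 1
    simp only [sum_const, card_univ, nsmul_eq_mul] at this
    linarith
  · have htr := hA.trace_eq_sum_eigenvalues
    rw [trace_adjMatrix] at htr
    exact htr.trans (hsum id)
  · have htr : (G.adjMatrix ℝ * G.adjMatrix ℝ).trace = Fintype.card V * k := by
      simp only [Matrix.trace, Matrix.diag_apply, adjMatrix_mul_self_apply_self, hreg.degree_eq,
        sum_const, card_univ, nsmul_eq_mul]
    rw [← htr, hA.trace_mul_self_eq_sum]
    linarith [hsum (· ^ 2)]

/-- For a Shilla distance-regular graph with `b(Γ) = b ≥ 2` whose two smallest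
eigenvalues have equal multiplicities, `a₃ - b < b₂ + c₂ < a₃ + b`. -/
theorem stmt11 {V : Type*} [Fintype V] [DecidableEq V] (G : SimpleGraph V)
    [DecidableRel G.Adj] (b c a : ℕ → ℕ) (hG : IsShilla G b c a)
    (β : ℕ) (hβ2 : 2 ≤ β) (hβ : a 3 = a 1 + β)
    (θ2 θ3 : ℝ) (h2 : IsEig G θ2) (h3 : IsEig G θ3)
    (h32 : θ3 < θ2) (h2a : θ2 < (a 3 : ℝ))
    (hall : ∀ θ : ℝ, IsEig G θ → θ = (b 0 : ℝ) ∨ θ = (a 3 : ℝ) ∨ θ = θ2 ∨ θ = θ3)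
    (hmult : eigMult G θ2 = eigMult G θ3) :
    (a 3 : ℤ) - β < (b 2 : ℤ) + c 2 ∧ (b 2 : ℤ) + c 2 < (a 3 : ℤ) + β := by
  obtain ⟨h, ⟨h1, h1k, -⟩⟩ := hG
  have hb2 : (0 : ℝ) < b 2 := mod_cast h.b_pos (by norm_num)
  have hc2 : (0 : ℝ) < c 2 := mod_cast h.c_pos (i := 1) (by norm_num)
  have hc3 : (0 : ℝ) < c 3 := mod_cast h.c_pos (i := 2) (by norm_num)
  have hβ2' : (2 : ℝ) ≤ β := mod_cast hβ2
  have ha1 : (a 1 : ℝ) = a 3 - β := by rw [hβ]; push_cast; ring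
  obtain ⟨k1, k2, k3⟩ := h.valency_eq
  have hk : (b 0 : ℝ) = a 3 * β := by
    have hq := h.quartic_of_isEig h1
    rw [sub_self, zero_mul, eq_comm, mul_eq_zero, or_iff_right (by positivity), ha1] at hq
    linarith
  have ha3 : (0 : ℝ) < a 3 := by
    have : (0 : ℝ) ≤ a 3 := Nat.cast_nonneg _
    nlinarith
  have ea2 : (a 2 : ℝ) = a 3 * β - c 2 - b 2 := by linarith
  have eb1 : (b 1 : ℝ) = (β - 1) * (a 3 + 1) := by linarith
  have ec3 : (c 3 : ℝ) = (β - 1) * a 3 := by linarith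
  have hquad (θ : ℝ) (hθ : IsEig G θ) (hlt : θ < a 3) :
      θ ^ 2 - (a 3 - β - (b 2 + c 2)) * θ + ((β - 1) * b 2 - a 3 * β + (b 2 + c 2)) = 0 := by
    have hq := h.quartic_of_isEig hθ
    rw [ha1, ea2, eb1, ec3, hk] at hq
    have hne : (θ - a 3 * β) * (θ - a 3) ≠ 0 :=
      mul_ne_zero (by linarith) (by linarith)
    refine (mul_eq_zero_iff_left hne).mp ?_
    linear_combination hq
  have q2 := hquad θ2 h2 h2a
  have q3 := hquad θ3 h3 (h32.trans h2a)
  have hS : θ2 + θ3 = a 3 - β - (b 2 + c 2) := by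
    refine mul_left_cancel₀ (sub_ne_zero.mpr h32.ne') ?_
    linear_combination q2 - q3
  have hSS : θ2 ^ 2 + θ3 ^ 2 = (a 3 - β - (b 2 + c 2) : ℝ) ^ 2 -
      2 * ((β - 1) * b 2 - a 3 * β + (b 2 + c 2)) := by
    linear_combination q2 + q3 + (a 3 - β - (b 2 + c 2) : ℝ) * hS
  obtain ⟨m1, m, t0, t1, t2⟩ := spectral_moments_of_four_eigenvalues G h.connected
    h.isRegularOfDegree h1k h2a h32 hall hmult
  have hn : (Fintype.card V : ℝ) * c 2 =
      c 2 * (1 + a 3 * β) + a 3 * β * (β - 1) * (a 3 + 1) + β * (a 3 + 1) * b 2 := by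
    have hcard := h.card_mul_eq
    rw [eb1, ec3, hk] at hcard
    refine mul_right_cancel₀ (ec3 ▸ hc3).ne' ?_
    linear_combination hcard
  rw [hS, hk] at t1
  rw [hSS, hk] at t2
  generalize (Fintype.card V : ℝ) = n at *
  have hE : (a 3 * β + a 3 * (n - 1)) * ((a 3 - β - (b 2 + c 2) : ℝ) ^ 2 -
      2 * ((β - 1) * b 2 - a 3 * β + (b 2 + c 2)) - 2 * a 3 ^ 2) =
      (2 * a 3 - (a 3 - β - (b 2 + c 2))) * (n * (a 3 * β) - (a 3 * β) ^ 2 - a 3 ^ 2 * (n - 1)) := by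
    obtain rfl : m1 = n - 1 - 2 * m := by linarith
    generalize (a 3 - β - (b 2 + c 2) : ℝ) = S at *
    generalize S ^ 2 - 2 * ((β - 1) * b 2 - a 3 * β + (b 2 + c 2) : ℝ) = T at *
    linear_combination (2 * a 3 ^ 2 - T) * t1 - (2 * a 3 - S) * t2
  have habs := abs_sub_lt_of_equal_mult_identity ha3.le hβ2' hb2.le hc2 (by
    have hne : (a 3 * β * (a 3 + 1) : ℝ) ≠ 0 := by positivity
    refine (mul_eq_zero_iff_left hne).mp ?_
    linear_combination (c 2 : ℝ) * hE - (a 3 * ((a 3 - β - (b 2 + c 2) : ℝ) ^ 2 -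
      2 * ((β - 1) * b 2 - a 3 * β + (b 2 + c 2)) - 2 * a 3 ^ 2)
      - (2 * a 3 - (a 3 - β - (b 2 + c 2))) * (a 3 * β - a 3 ^ 2)) * hn)
  rw [abs_lt] at habs
  have hlow : (a 3 : ℝ) - β < b 2 + c 2 := by linarith [habs.1]
  have hupp : (b 2 : ℝ) + c 2 < a 3 + β := by linarith [habs.2]
  exact ⟨mod_cast hlow, mod_cast hupp⟩
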